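/- arXiv:1503.06390 — 2 statements merged into one kernel-verified Lean document; each statement's English description precedes it below -/
import Mathlib

section
/- Let A be a unital C*-algebra, B ⊆ A a unital C*-subalgebra, X a selfadjoint element of A, η : A → B a continuous positive linear map, and q ∈ B strictly positive. Then for every selfadjoint u ∈ B the element (X−u)v⁻¹(X−u)+v is invertible for every strictly positive v ∈ B (since it is ≥ v), and there exists exactly one strictly positive v ∈ B satisfying the fixed-point equation v = q + η(((X−u)v⁻¹(X−u)+v)⁻¹); moreover any such v satisfies v ≥ q. -/
/-!
Set `D v = (X - u) v⁻¹ (X - u) + v` and `H v = η ((D v)⁻¹)`. Since `D` is order preserving in one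
copy of `v` and order reversing in the other, `v ≤ c w` and `w ≤ c v` together imply the same
relations for `D v`, `D w`, then for their inverses, and then for `H v`, `H w`: the map `H` does not
increase the Thompson distance. If moreover `H ≤ C q`, adding `q` shrinks the excess `c - 1` by the
factor `C / (1 + C)`. On the order interval `[q, (1 + C) q]` this excess is comparable to the norm
distance, so a high iterate of `v ↦ q + H v` is a norm contraction there.
-/

noncomputable section

open Filter Topology
open scoped ComplexOrder

/-- The real part `(b + b*)/2` of an element of a complex star algebra. -/
def reP {A : Type*} [NonUnitalRing A] [StarRing A] [Module ℂ A] (b : A) : A :=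
  (2 : ℂ)⁻¹ • (b + star b)

/-- The imaginary part `(b - b*)/(2i)` of an element of a complex star algebra. -/
def imP {A : Type*} [NonUnitalRing A] [StarRing A] [Module ℂ A] (b : A) : A :=
  (2 * Complex.I)⁻¹ • (b - star b)

/-- An element of a C*-algebra is strictly positive if it is selfadjoint, positive
(with respect to the canonical order coming from the star-ordered ring structure)
and invertible. -/
def SPos {A : Type*} [Ring A] [StarRing A] [PartialOrder A] (v : A) : Prop :=
  IsSelfAdjoint v ∧ 0 ≤ v ∧ IsUnit v

section

open Function Set

lemma existsUnique_isFixedPt_of_dist_iterate_le {α : Type*} [MetricSpace α] {S : Set α}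
    (hS : IsComplete S) (hne : S.Nonempty) {f : α → α} (hf : MapsTo f S S) {n : ℕ} {K : ℝ}
    (hK : K < 1) (hdist : ∀ x ∈ S, ∀ y ∈ S, dist (f^[n] x) (f^[n] y) ≤ K * dist x y) :
    ∃! x, x ∈ S ∧ IsFixedPt f x := by
  have := hS.completeSpace_coe
  have := hne.to_subtype
  have hcontr : ContractingWith K.toNNReal (hf.restrict f S S)^[n] := by
    refine ⟨Real.toNNReal_lt_one.2 hK, LipschitzWith.of_dist_le_mul fun x y ↦ ?_⟩
    rw [hf.iterate_restrict]
    exact (hdist x x.2 y y.2).trans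
      (mul_le_mul_of_nonneg_right (Real.le_coe_toNNReal K) dist_nonneg)
  refine ⟨hcontr.fixedPoint, ⟨Subtype.coe_prop _,
    congrArg Subtype.val hcontr.isFixedPt_fixedPoint_iterate⟩, fun y hy ↦ ?_⟩
  have hy_fixed : IsFixedPt (hf.restrict f S S) ⟨y, hy.1⟩ := Subtype.ext hy.2
  exact congrArg Subtype.val (hcontr.fixedPoint_unique (hy_fixed.iterate n))

/-- `ThompsonClose c v w` says that `v` and `w` dominate each other up to the factor `c`, i.e. that
their Thompson distance is at most `log c`. -/
def ThompsonClose {E : Type*} [LE E] [SMul ℝ E] (c : ℝ) (v w : E) : Prop :=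
  v ≤ c • w ∧ w ≤ c • v

/-- `H` does not increase the Thompson distance between points of `S`; distances are nonnegative,
whence the restriction to factors `1 ≤ c`. -/
def ThompsonNonexpansiveOn {E F : Type*} [LE E] [SMul ℝ E] [LE F] [SMul ℝ F] (H : E → F)
    (S : Set E) : Prop :=
  ∀ ⦃c : ℝ⦄, 1 ≤ c → ∀ ⦃v⦄, v ∈ S → ∀ ⦃w⦄, w ∈ S → ThompsonClose c v w → ThompsonClose c (H v) (H w)

section OrderedModule

variable {E F : Type*} [AddCommGroup E] [PartialOrder E] [Module ℝ E]
  [AddCommGroup F] [PartialOrder F] [Module ℝ F]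

lemma ThompsonClose.map (f : E →ₚ[ℝ] F) {c : ℝ} {v w : E} (h : ThompsonClose c v w) :
    ThompsonClose c (f v) (f w) := by
  simp only [ThompsonClose, ← map_smul]
  exact ⟨OrderHomClass.mono f h.1, OrderHomClass.mono f h.2⟩

variable [IsOrderedAddMonoid E]

lemma const_add_le_smul_const_add [PosSMulMono ℝ E] {q h k : E} {C s : ℝ} (hC : 0 ≤ C)
    (hs : 0 ≤ s) (hk : k ≤ C • q) (hhk : h ≤ (1 + s) • k) :
    q + h ≤ (1 + C / (1 + C) * s) • (q + k) :=
  calc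
    q + h ≤ q + (1 + s) • k := by gcongr
    _ = q + (1 + C / (1 + C) * s) • k + (s / (1 + C)) • k := by match_scalars <;> field_simp; ring
    _ ≤ q + (1 + C / (1 + C) * s) • k + (s / (1 + C)) • (C • q) := by gcongr
    _ = (1 + C / (1 + C) * s) • (q + k) := by match_scalars <;> field_simp

namespace ThompsonClose

lemma const_add [PosSMulMono ℝ E] {q h k : E} {C s : ℝ} (hC : 0 ≤ C) (hs : 0 ≤ s)
    (hh : h ≤ C • q) (hk : k ≤ C • q) (hhk : ThompsonClose (1 + s) h k) :
    ThompsonClose (1 + C / (1 + C) * s) (q + h) (q + k) :=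
  ⟨const_add_le_smul_const_add hC hs hk hhk.1, const_add_le_smul_const_add hC hs hh hhk.2⟩

lemma add {c : ℝ} {v w v' w' : E} (h : ThompsonClose c v w) (h' : ThompsonClose c v' w') :
    ThompsonClose c (v + v') (w + w') := by
  simp only [ThompsonClose, smul_add]
  exact ⟨add_le_add h.1 h'.1, add_le_add h.2 h'.2⟩

lemma iterate_const_add [PosSMulMono ℝ E] {q : E} {H : E → E} {C s : ℝ} (hC : 0 ≤ C)
    (hs : 0 ≤ s) (hH : MapsTo H (Ici q) (Icc 0 (C • q))) (hne : ThompsonNonexpansiveOn H (Ici q))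
    {v w : E} (hv : q ≤ v) (hw : q ≤ w) (hvw : ThompsonClose (1 + s) v w) (n : ℕ) :
    ThompsonClose (1 + (C / (1 + C)) ^ n * s) ((q + H ·)^[n] v) ((q + H ·)^[n] w) := by
  have hmaps : MapsTo (q + H ·) (Ici q) (Ici q) := fun x hx ↦ le_add_of_nonneg_right (hH hx).1
  induction n with
  | zero => simpa only [pow_zero, one_mul, iterate_zero, id_eq] using hvw
  | succ n ih =>
    have hvn := hmaps.iterate n hv
    have hwn := hmaps.iterate n hw
    have hsn : 0 ≤ (C / (1 + C)) ^ n * s := by positivity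
    rw [pow_succ', mul_assoc, iterate_succ_apply', iterate_succ_apply']
    exact const_add hC hsn (hH hvn).2 (hH hwn).2 (hne (le_add_of_nonneg_right hsn) hvn hwn ih)

end ThompsonClose

end OrderedModule

lemma ringInverse_smul {K R : Type*} [Field K] [Ring R] [Algebra K R] {c : K} (hc : c ≠ 0) (a : R) :
    Ring.inverse (c • a) = c⁻¹ • Ring.inverse a := by
  have hscalar : Ring.inverse (algebraMap K R c) = algebraMap K R c⁻¹ :=
    Ring.inverse_unit (Units.map (algebraMap K R).toMonoidHom (Units.mk0 c hc))
  rw [Algebra.smul_def, Ring.mul_inverse_rev' (Algebra.commutes c a), hscalar, Algebra.smul_def,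
    Algebra.commutes]

lemma ringInverse_nonneg {R : Type*} [Ring R] [PartialOrder R] [StarRing R] [StarOrderedRing R]
    {a : R} (ha : 0 ≤ a) : 0 ≤ Ring.inverse a := by
  by_cases hunit : IsUnit a
  · have hstar : star (Ring.inverse a) = Ring.inverse a := by
      rw [← Ring.inverse_star, (IsSelfAdjoint.of_nonneg ha).star_eq]
    simpa [hstar, Ring.inverse_mul_cancel a hunit] using
      star_left_conjugate_nonneg ha (Ring.inverse a)
  · rw [Ring.inverse_non_unit a hunit]

lemma sPos_iff_isStrictlyPositive {R : Type*} [Ring R] [StarRing R] [PartialOrder R]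
    [StarOrderedRing R] {v : R} : SPos v ↔ IsStrictlyPositive v :=
  ⟨fun h ↦ ⟨h.2.1, h.2.2⟩, fun h ↦ ⟨h.isSelfAdjoint, h.nonneg, h.isUnit⟩⟩

section CStarAlgebra

variable {A B : Type*} [CStarAlgebra A] [PartialOrder A] [StarOrderedRing A]
  [CStarAlgebra B] [PartialOrder B] [StarOrderedRing B]

lemma exists_pos_smul_one_le {q : A} (hq : IsStrictlyPositive q) :
    ∃ r : ℝ, 0 < r ∧ r • (1 : A) ≤ q := by
  cases subsingleton_or_nontrivial A
  · exact ⟨1, one_pos, (Subsingleton.elim _ _).le⟩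
  · simpa only [Algebra.algebraMap_eq_smul_one] using
      (CFC.exists_pos_algebraMap_le_iff hq.isSelfAdjoint).2 fun x ↦ hq.spectrum_pos

lemma le_norm_smul_one {a : A} (ha : IsSelfAdjoint a) : a ≤ ‖a‖ • (1 : A) := by
  simpa only [Algebra.algebraMap_eq_smul_one] using ha.le_algebraMap_norm_self

lemma exists_le_mul_norm_smul {q : A} (hq : IsStrictlyPositive q) :
    ∃ r : ℝ, 0 ≤ r ∧ ∀ a : A, IsSelfAdjoint a → a ≤ (r * ‖a‖) • q := by
  obtain ⟨r, hr, hrq⟩ := exists_pos_smul_one_le hq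
  refine ⟨r⁻¹, by positivity, fun a ha ↦ ?_⟩
  calc
    a ≤ ‖a‖ • (1 : A) := le_norm_smul_one ha
    _ = (r⁻¹ * ‖a‖) • (r • (1 : A)) := by rw [smul_smul]; field_simp
    _ ≤ (r⁻¹ * ‖a‖) • q := by gcongr

lemma exists_thompsonClose_one_add_mul_norm_sub {q : A} (hq : IsStrictlyPositive q) :
    ∃ r : ℝ, 0 ≤ r ∧ ∀ v w : A, q ≤ v → q ≤ w → ThompsonClose (1 + r * ‖v - w‖) v w := by
  obtain ⟨r, hr, hrq⟩ := exists_le_mul_norm_smul hq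
  have hle : ∀ x y : A, q ≤ x → q ≤ y → x ≤ (1 + r * ‖x - y‖) • y := by
    intro x y hx hy
    have hsa : IsSelfAdjoint (x - y) := (hq.of_le hx).isSelfAdjoint.sub (hq.of_le hy).isSelfAdjoint
    rw [add_smul, one_smul, ← sub_le_iff_le_add']
    exact (hrq _ hsa).trans (by gcongr)
  exact ⟨r, hr, fun v w hv hw ↦ ⟨hle v w hv hw, norm_sub_rev v w ▸ hle w v hw hv⟩⟩

lemma isStrictlyPositive_map_of_isUnit_map_one (φ : B →ₚ[ℝ] A) (hφ : IsUnit (φ 1)) {v : B}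
    (hv : IsStrictlyPositive v) : IsStrictlyPositive (φ v) := by
  obtain ⟨r, hr, hrv⟩ := exists_pos_smul_one_le hv
  have hφ_one : IsStrictlyPositive (φ 1) := hφ.isStrictlyPositive (map_nonneg φ zero_le_one)
  refine (hφ_one.smul hr).of_le ?_
  rw [← map_smul]
  exact OrderHomClass.mono φ hrv

lemma norm_le_of_neg_smul_one_le_of_le_smul_one {a : A} {K : ℝ} (hK : 0 ≤ K)
    (hneg : -a ≤ K • (1 : A)) (hpos : a ≤ K • (1 : A)) : ‖a‖ ≤ K := by
  cases subsingleton_or_nontrivial A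
  · simpa [Subsingleton.elim a 0] using hK
  rw [← Algebra.algebraMap_eq_smul_one] at hneg hpos
  have ha : IsSelfAdjoint a := by
    simpa using (IsSelfAdjoint.algebraMap A (.all K)).sub (.of_nonneg (sub_nonneg.2 hpos))
  rcases CStarAlgebra.norm_or_neg_norm_mem_spectrum ha with h | h
  · exact (le_algebraMap_iff_spectrum_le ha).1 hpos _ h
  · have h' : ‖a‖ ∈ spectrum ℝ (-a) := by rwa [← spectrum.neg_eq, Set.mem_neg]
    exact (le_algebraMap_iff_spectrum_le ha.neg).1 hneg _ h'

namespace ThompsonClose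

lemma norm_sub_le {s : ℝ} (hs : 0 ≤ s) {v w p : A} (hp : 0 ≤ p) (hv : v ≤ p) (hw : w ≤ p)
    (hvw : ThompsonClose (1 + s) v w) : ‖v - w‖ ≤ s * ‖p‖ := by
  have hsub : ∀ x y : A, y ≤ p → x ≤ (1 + s) • y → x - y ≤ (s * ‖p‖) • (1 : A) := by
    intro x y hy hxy
    calc
      x - y ≤ s • y := by simpa only [add_smul, one_smul, sub_le_iff_le_add'] using hxy
      _ ≤ s • (‖p‖ • (1 : A)) := by gcongr; exact hy.trans (le_norm_smul_one (.of_nonneg hp))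
      _ = (s * ‖p‖) • (1 : A) := smul_smul ..
  refine norm_le_of_neg_smul_one_le_of_le_smul_one (by positivity) ?_ (hsub v w hw hvw.1)
  rw [neg_sub]
  exact hsub w v hv hvw.2

lemma conjugate {c : ℝ} {v w : A} (h : ThompsonClose c v w) (y : A) :
    ThompsonClose c (star y * v * y) (star y * w * y) := by
  have hsmul (x : A) : c • (star y * x * y) = star y * (c • x) * y := by
    rw [mul_smul_comm, smul_mul_assoc]
  simp only [ThompsonClose, hsmul]
  exact ⟨star_left_conjugate_le_conjugate h.1 y, star_left_conjugate_le_conjugate h.2 y⟩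

lemma ringInverse {c : ℝ} (hc : 0 < c) {v w : A} (hv : IsStrictlyPositive v)
    (hw : IsStrictlyPositive w) (h : ThompsonClose c v w) :
    ThompsonClose c (Ring.inverse v) (Ring.inverse w) := by
  have hle : ∀ x y : A, IsStrictlyPositive x → x ≤ c • y →
      Ring.inverse y ≤ c • Ring.inverse x := by
    intro x y hx hxy
    have hinv : c⁻¹ • Ring.inverse y ≤ Ring.inverse x := by
      rw [← ringInverse_smul hc.ne']
      exact CStarAlgebra.ringInverse_le_ringInverse hxy hx
    rwa [inv_smul_le_iff_of_pos hc] at hinv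
  exact ⟨hle w v hw h.2, hle v w hv h.1⟩

end ThompsonClose

theorem ThompsonNonexpansiveOn.existsUnique_eq_const_add {q p : A} (hq : IsStrictlyPositive q)
    {H : A → A} (hH : MapsTo H (Ici q) (Icc 0 p)) (hne : ThompsonNonexpansiveOn H (Ici q)) :
    ∃! v, q ≤ v ∧ v = q + H v := by
  obtain ⟨C, hC, hpC⟩ : ∃ C : ℝ, 0 ≤ C ∧ p ≤ C • q := by
    obtain ⟨k, hk, hkq⟩ := exists_le_mul_norm_smul hq
    have hp : 0 ≤ p := nonempty_Icc.1 ⟨H q, hH self_mem_Ici⟩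
    exact ⟨k * ‖p‖, by positivity, hkq p (.of_nonneg hp)⟩
  obtain ⟨r, hr, hclose⟩ := exists_thompsonClose_one_add_mul_norm_sub hq
  set b := q + C • q
  have hqb : q ≤ b := le_add_of_nonneg_right (smul_nonneg hC hq.nonneg)
  have hHC : MapsTo H (Ici q) (Icc 0 (C • q)) := hH.mono_right (Icc_subset_Icc_right hpC)
  have hIcc {v : A} (hv : q ≤ v) : q + H v ∈ Icc q b :=
    ⟨le_add_of_nonneg_right (hHC hv).1, add_le_add_right (hHC hv).2 q⟩
  have hmaps : MapsTo (q + H ·) (Icc q b) (Icc q b) := fun v hv ↦ hIcc hv.1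
  have hdist : ∀ n, ∀ v ∈ Icc q b, ∀ w ∈ Icc q b,
      dist ((q + H ·)^[n] v) ((q + H ·)^[n] w) ≤
        (C / (1 + C)) ^ n * (r * ‖b‖) * dist v w := by
    intro n v hv w hw
    have hiter := (hclose v w hv.1 hw.1).iterate_const_add hC (by positivity) hHC hne hv.1 hw.1 n
    rw [dist_eq_norm, dist_eq_norm]
    exact (hiter.norm_sub_le (by positivity) (hq.nonneg.trans hqb) (hmaps.iterate n hv).2
      (hmaps.iterate n hw).2).trans_eq (by ring)
  obtain ⟨n, hn⟩ : ∃ n : ℕ, (C / (1 + C)) ^ n * (r * ‖b‖) < 1 := by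
    have hlim := (tendsto_pow_atTop_nhds_zero_of_lt_one (r := C / (1 + C)) (by positivity)
      ((div_lt_one (by positivity)).2 (lt_one_add C))).mul_const (r * ‖b‖)
    rw [zero_mul] at hlim
    exact (hlim.eventually_lt_const one_pos).exists
  obtain ⟨v, ⟨hv, hv_fixed⟩, huniq⟩ := existsUnique_isFixedPt_of_dist_iterate_le
    isClosed_Icc.isComplete ⟨q, le_rfl, hqb⟩ hmaps hn (hdist n)
  exact ⟨v, ⟨hv.1, hv_fixed.symm⟩, fun w hw ↦ huniq w ⟨hw.2 ▸ hIcc hw.1, hw.2.symm⟩⟩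

/-- For selfadjoint `y` and strictly positive `w`, the inverse of `imResolventDenom y w` is the
imaginary part of `(y - i w)⁻¹`. It is defined for all `y` and `w`, with `Ring.inverse w = 0` if `w`
is not invertible. -/
def imResolventDenom (y w : A) : A :=
  star y * Ring.inverse w * y + w

lemma le_imResolventDenom (y : A) {w : A} (hw : 0 ≤ w) : w ≤ imResolventDenom y w :=
  le_add_of_nonneg_left (star_left_conjugate_nonneg (ringInverse_nonneg hw) y)

lemma isStrictlyPositive_imResolventDenom (y : A) {w : A} (hw : IsStrictlyPositive w) :
    IsStrictlyPositive (imResolventDenom y w) :=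
  hw.of_le (le_imResolventDenom y hw.nonneg)

lemma ThompsonClose.ringInverse_imResolventDenom {c : ℝ} (hc : 0 < c) {v w : A}
    (hv : IsStrictlyPositive v) (hw : IsStrictlyPositive w) (h : ThompsonClose c v w) (y : A) :
    ThompsonClose c (Ring.inverse (imResolventDenom y v)) (Ring.inverse (imResolventDenom y w)) :=
  (((h.ringInverse hc hv hw).conjugate y).add h).ringInverse hc
    (isStrictlyPositive_imResolventDenom y hv) (isStrictlyPositive_imResolventDenom y hw)

/-- The map `φ` takes the role of the inclusion `B ⊆ A`, and `y` that of `X - u`. -/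
theorem fixed_point_existence_uniqueness_general (φ : B →ₚ[ℝ] A) (hφ : IsUnit (φ 1)) (y : A)
    (η : A →ₚ[ℝ] B) {q : B} (hq : IsStrictlyPositive q) :
    (∀ v : B, IsStrictlyPositive v →
      φ v ≤ imResolventDenom y (φ v) ∧ IsUnit (imResolventDenom y (φ v))) ∧
    (∃! v : B, IsStrictlyPositive v ∧ v = q + η (Ring.inverse (imResolventDenom y (φ v)))) ∧
    (∀ v : B, IsStrictlyPositive v →
      v = q + η (Ring.inverse (imResolventDenom y (φ v))) → q ≤ v) := by
  have hφv {v : B} (hv : IsStrictlyPositive v) : IsStrictlyPositive (φ v) :=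
    isStrictlyPositive_map_of_isUnit_map_one φ hφ hv
  have hη_nonneg {v : B} (hv : IsStrictlyPositive v) :
      0 ≤ η (Ring.inverse (imResolventDenom y (φ v))) :=
    map_nonneg η (ringInverse_nonneg (isStrictlyPositive_imResolventDenom y (hφv hv)).nonneg)
  have hmaps : MapsTo (fun v ↦ η (Ring.inverse (imResolventDenom y (φ v)))) (Ici q)
      (Icc 0 (η (Ring.inverse (φ q)))) := fun v hv ↦ by
    have hφqv : φ q ≤ imResolventDenom y (φ v) :=
      (OrderHomClass.mono φ hv).trans (le_imResolventDenom y (hφv (hq.of_le hv)).nonneg)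
    exact ⟨hη_nonneg (hq.of_le hv),
      OrderHomClass.mono η (CStarAlgebra.ringInverse_le_ringInverse hφqv (hφv hq))⟩
  have hne : ThompsonNonexpansiveOn (fun v ↦ η (Ring.inverse (imResolventDenom y (φ v))))
      (Ici q) := fun c hc v hv w hw hvw ↦
    ((hvw.map φ).ringInverse_imResolventDenom (one_pos.trans_le hc) (hφv (hq.of_le hv))
      (hφv (hq.of_le hw)) y).map η
  have hlower (v : B) (hv : IsStrictlyPositive v)
      (hv_eq : v = q + η (Ring.inverse (imResolventDenom y (φ v)))) : q ≤ v :=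
    (le_add_of_nonneg_right (hη_nonneg hv)).trans_eq hv_eq.symm
  refine ⟨fun v hv ↦ ⟨le_imResolventDenom y (hφv hv).nonneg,
    (isStrictlyPositive_imResolventDenom y (hφv hv)).isUnit⟩, ?_, hlower⟩
  obtain ⟨v, ⟨hqv, hv⟩, huniq⟩ := hne.existsUnique_eq_const_add hq hmaps
  exact ⟨v, ⟨hq.of_le hqv, hv⟩, fun w hw ↦ huniq w ⟨hlower w hw.1 hw.2, hw.2⟩⟩

end CStarAlgebra

end

/-- existence-and-uniqueness part of Proposition 3.1: for a unital
C*-subalgebra `B ⊆ A` (encoded by an injective unital *-homomorphism `ι`), a selfadjoint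
`X ∈ A`, a continuous positive linear map `η : A → B` and a strictly positive `q ∈ B`,
for every selfadjoint `u ∈ B` the element `(X−u)v⁻¹(X−u)+v` dominates `v` and is invertible
for every strictly positive `v`, there is exactly one strictly positive solution `v` of
`v = q + η(((X−u)v⁻¹(X−u)+v)⁻¹)`, and any such solution satisfies `v ≥ q`. -/
theorem fixed_point_existence_uniqueness
    {A B : Type*} [CStarAlgebra A] [PartialOrder A] [StarOrderedRing A]
    [CStarAlgebra B] [PartialOrder B] [StarOrderedRing B]
    (ι : B →⋆ₐ[ℂ] A) (hι : Function.Injective ι)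
    (X : A) (hX : IsSelfAdjoint X)
    (η : A →L[ℂ] B) (hη : ∀ a : A, 0 ≤ a → 0 ≤ η a)
    (q : B) (hq : SPos q) (u : B) (hu : IsSelfAdjoint u) :
    (∀ v : B, SPos v →
      ι v ≤ (X - ι u) * Ring.inverse (ι v) * (X - ι u) + ι v ∧
      IsUnit ((X - ι u) * Ring.inverse (ι v) * (X - ι u) + ι v)) ∧
    (∃! v : B, SPos v ∧
      v = q + η (Ring.inverse ((X - ι u) * Ring.inverse (ι v) * (X - ι u) + ι v))) ∧
    (∀ v : B, SPos v →
      v = q + η (Ring.inverse ((X - ι u) * Ring.inverse (ι v) * (X - ι u) + ι v)) →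
      q ≤ v) := by
  have h := fixed_point_existence_uniqueness_general (.ofClass (ι.restrictScalars ℝ))
    (isUnit_one.map ι) (X - ι u) (.mk₀ ((η : A →ₗ[ℂ] B).restrictScalars ℝ) hη)
    (sPos_iff_isStrictlyPositive.1 hq)
  simp only [sPos_iff_isStrictlyPositive, imResolventDenom, (hX.sub (hu.map ι)).star_eq] at h ⊢
  exact h
end
end

section
/- Let A be a unital C*-algebra, B ⊆ A a unital C*-subalgebra, X a selfadjoint element of A, η : A → B a continuous 2-positive linear map, and q ∈ B strictly positive. For each selfadjoint u ∈ B let v_q(u) denote the unique strictly positive solution of v = q + η(((X−u)v⁻¹(X−u)+v)⁻¹). Then there exist an open subset U of B containing every selfadjoint element of B and an analytic map ṽ : U → B (analytic as a map between the complex Banach spaces B and B) such that ṽ(u) = v_q(u) for every selfadjoint u ∈ B. -/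
noncomputable section

open Filter Topology
open scoped ComplexOrder

/-!
For strictly positive `v` and selfadjoint `y` one has
`(y v⁻¹ y + v)⁻¹ = ((v + iy)⁻¹ + (v - iy)⁻¹)/2`, so with `y = X - u` the equation becomes
`F (u, v) = 0` for a map `F` that is holomorphic in both variables, and the analytic implicit
function theorem applies at a selfadjoint `u` as soon as `∂F/∂v` is invertible there. With
`r = (v + iy)⁻¹`, this derivative is `h ↦ h + η (r h r + r* h r*)/2`. Conjugate it by `v^{1/2}`: by
the operator Cauchy–Schwarz inequality for the 2-positive map `η` and
`η (r v r*) = η (r* v r) = v - q`, its distance to the identity becomes at most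
`‖v^{-1/2} (v - q) v^{-1/2}‖`, which is less than `1` since `q` is strictly positive.

The symmetry `F (u, v*) = F (u, v)*` for selfadjoint `u` makes the implicit solution selfadjoint,
hence strictly positive near `u`, so it agrees with `v_q` on selfadjoint elements. The local
solutions glue: two of them that agree on selfadjoint elements agree at every `w` in both of their
balls, by the identity theorem on the complex line `z ↦ Re w + z Im w`.
-/

section SelfAdjointExtension

variable {E F : Type*} [NormedAddCommGroup E] [NormedSpace ℂ E] [StarAddMonoid E]
  [StarModule ℂ E] [NormedAddCommGroup F] [NormedSpace ℂ F]

theorem eqOn_of_eqOn_isSelfAdjoint {f g : E → F} {O : Set E} (hO : IsOpen O)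
    (hc : Convex ℝ O) (hf : AnalyticOnNhd ℂ f O) (hg : AnalyticOnNhd ℂ g O)
    (hfg : ∀ x ∈ O, IsSelfAdjoint x → f x = g x) {w : E} (hw : w ∈ O)
    (hw_re : (realPart w : E) ∈ O) : f w = g w := by
  let line : ℂ → E := fun z ↦ realPart w + z • (imaginaryPart w : E)
  have line_I : line Complex.I = w := realPart_add_I_smul_imaginaryPart w
  have line_analytic : AnalyticOnNhd ℂ line (line ⁻¹' O) := fun z _ ↦ by fun_prop
  have preimage_convex : Convex ℝ (line ⁻¹' O) :=
    (hc.translate_preimage_right _).is_linear_preimage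
      (f := fun z : ℂ ↦ z • (imaginaryPart w : E))
      ⟨fun _ _ ↦ add_smul _ _ _, fun _ _ ↦ smul_assoc _ _ _⟩
  have zero_mem : (0 : ℂ) ∈ line ⁻¹' O := by simpa [line] using hw_re
  have ofReal_tendsto : Tendsto ((↑) : ℝ → ℂ) (𝓝[≠] 0) (𝓝[≠] 0) :=
    Complex.continuous_ofReal.continuousWithinAt.tendsto_nhdsWithin fun t ht ↦ by simpa using ht
  have frequently_eq : ∃ᶠ z in 𝓝[≠] (0 : ℂ), (f ∘ line) z = (g ∘ line) z := by
    refine ofReal_tendsto.frequently (Eventually.frequently ?_)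
    have line_mem : ∀ᶠ z in 𝓝[≠] (0 : ℂ), z ∈ line ⁻¹' O :=
      nhdsWithin_le_nhds ((hO.preimage (by fun_prop)).mem_nhds zero_mem)
    filter_upwards [ofReal_tendsto.eventually line_mem] with t ht
    exact hfg _ ht ((realPart w).2.add (.smul (Complex.conj_ofReal t) (imaginaryPart w).2))
  have eqOn_line := (hf.comp line_analytic fun _ hz ↦ hz).eqOn_of_preconnected_of_frequently_eq
    (hg.comp line_analytic fun _ hz ↦ hz) preimage_convex.isPreconnected zero_mem frequently_eq
  simpa only [Function.comp_apply, line_I] using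
    eqOn_line (show Complex.I ∈ line ⁻¹' O by rwa [Set.mem_preimage, line_I])

theorem realPart_mem_ball [NormedStarGroup E] {u w : E} {r : ℝ} (hu : IsSelfAdjoint u)
    (hw : w ∈ Metric.ball u r) : (realPart w : E) ∈ Metric.ball u r := by
  rw [mem_ball_iff_norm] at hw ⊢
  calc ‖(realPart w : E) - u‖ = ‖realPart (w - u)‖ := by
        rw [← AddSubgroup.norm_coe, map_sub, AddSubgroupClass.coe_sub, hu.coe_realPart]
    _ ≤ ‖w - u‖ := realPart.norm_le _
    _ < r := hw

theorem exists_analyticOnNhd_extension_of_isSelfAdjoint [NormedStarGroup E] [CompleteSpace F]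
    (g : E → F)
    (hg : ∀ u, IsSelfAdjoint u →
      ∃ φ : E → F, AnalyticAt ℂ φ u ∧ ∀ᶠ w in 𝓝 u, IsSelfAdjoint w → φ w = g w) :
    ∃ U : Set E, IsOpen U ∧ {u : E | IsSelfAdjoint u} ⊆ U ∧
      ∃ f : E → F, AnalyticOnNhd ℂ f U ∧ ∀ u, IsSelfAdjoint u → f u = g u := by
  have local_ball (u : selfAdjoint E) : ∃ r > 0, ∃ φ : E → F,
      AnalyticOnNhd ℂ φ (Metric.ball u r) ∧
        ∀ w ∈ Metric.ball (u : E) r, IsSelfAdjoint w → φ w = g w := by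
    obtain ⟨φ, hφ, hφg⟩ := hg u u.2
    obtain ⟨r, hr, h⟩ := Metric.eventually_nhds_iff_ball.1 (hφ.eventually_analyticAt.and hφg)
    exact ⟨r, hr, φ, fun w hw ↦ (h w hw).1, fun w hw ↦ (h w hw).2⟩
  choose r hr φ hφ hφg using local_ball
  have compatible (u u' : selfAdjoint E) {w : E} (hw : w ∈ Metric.ball (u : E) (r u))
      (hw' : w ∈ Metric.ball (u' : E) (r u')) : φ u w = φ u' w :=
    eqOn_of_eqOn_isSelfAdjoint (Metric.isOpen_ball.inter Metric.isOpen_ball)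
      ((convex_ball (u : E) (r u)).inter (convex_ball (u' : E) (r u')))
      ((hφ u).mono Set.inter_subset_left) ((hφ u').mono Set.inter_subset_right)
      (fun x hx hx_sa ↦ (hφg u x hx.1 hx_sa).trans (hφg u' x hx.2 hx_sa).symm)
      ⟨hw, hw'⟩ ⟨realPart_mem_ball u.2 hw, realPart_mem_ball u'.2 hw'⟩
  have glued (w : E) : ∃ y, ∀ u : selfAdjoint E, w ∈ Metric.ball (u : E) (r u) → φ u w = y := by
    by_cases h : ∃ u : selfAdjoint E, w ∈ Metric.ball (u : E) (r u)
    · obtain ⟨u, hu⟩ := h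
      exact ⟨φ u w, fun u' hu' ↦ compatible u' u hu' hu⟩
    · exact ⟨0, fun u hu ↦ (h ⟨u, hu⟩).elim⟩
  choose f hf using glued
  have mem_ball_self (u : selfAdjoint E) : (u : E) ∈ Metric.ball (u : E) (r u) :=
    Metric.mem_ball_self (hr u)
  refine ⟨⋃ u : selfAdjoint E, Metric.ball (u : E) (r u), isOpen_iUnion fun _ ↦ Metric.isOpen_ball,
    fun u hu ↦ Set.mem_iUnion.2 ⟨⟨u, hu⟩, mem_ball_self ⟨u, hu⟩⟩, f, fun w hw ↦ ?_, fun u hu ↦ ?_⟩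
  · obtain ⟨u, hu⟩ := Set.mem_iUnion.1 hw
    refine (hφ u w hu).congr ?_
    filter_upwards [Metric.isOpen_ball.mem_nhds hu] with w' hw' using hf w' u hw'
  · rw [← hf u ⟨u, hu⟩ (mem_ball_self _), hφg ⟨u, hu⟩ u (mem_ball_self _) hu]

end SelfAdjointExtension

section ImplicitFunction

theorem exists_analyticAt_implicit_isSelfAdjoint {𝕜 E G H : Type*} [RCLike 𝕜]
    [NormedAddCommGroup E] [NormedSpace 𝕜 E] [CompleteSpace E]
    [NormedAddCommGroup G] [NormedSpace 𝕜 G] [CompleteSpace G] [StarAddMonoid G] [ContinuousStar G]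
    [NormedAddCommGroup H] [NormedSpace 𝕜 H] [CompleteSpace H] [StarAddMonoid H]
    {f : E × G → H} {u : E} {v : G} {f' : G →L[𝕜] H} (hf : AnalyticAt 𝕜 f (u, v))
    (hf_zero : f (u, v) = 0) (hv : IsSelfAdjoint v)
    (hf' : HasFDerivAt (fun y ↦ f (u, y)) f' v) (hf'_inv : f'.IsInvertible) :
    ∃ φ : E → G, AnalyticAt 𝕜 φ u ∧ φ u = v ∧ ∀ᶠ w in 𝓝 u,
      f (w, φ w) = 0 ∧ ((∀ y, f (w, star y) = star (f (w, y))) → IsSelfAdjoint (φ w)) := by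
  have f_contDiff : ContDiffAt 𝕜 ⊤ f (u, v) := hf.contDiffAt
  have partial_inv : (fderiv 𝕜 f (u, v) ∘L .inr 𝕜 E G).IsInvertible := by
    have := hf.differentiableAt.hasFDerivAt.comp v (hasFDerivAt_prodMk_right u v)
    rwa [← hf'.unique this]
  let φ := f_contDiff.implicitFunction WithTop.top_ne_zero partial_inv
  have φ_u : φ u = v := f_contDiff.implicitFunction_apply_self _ partial_inv
  have φ_analytic : AnalyticAt 𝕜 φ u :=
    (f_contDiff.contDiffAt_implicitFunction _ partial_inv).analyticAt
  have star_tendsto : Tendsto (fun w ↦ (w, star (φ w))) (𝓝 u) (𝓝 (u, v)) := by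
    have := φ_analytic.continuousAt.tendsto.star
    rw [φ_u, hv.star_eq] at this
    exact tendsto_id.prodMk_nhds this
  refine ⟨φ, φ_analytic, φ_u, ?_⟩
  filter_upwards [f_contDiff.eventually_apply_implicitFunction _ partial_inv,
    star_tendsto.eventually (f_contDiff.eventually_apply_eq_iff_implicitFunction _ partial_inv)]
    with w hw unique
  rw [hf_zero] at hw unique
  refine ⟨hw, fun hstar ↦ (unique.1 ?_).symm⟩
  rw [hstar, hw, star_zero]

end ImplicitFunction


section StrictlyPositive

theorem isUnit_one_add_I_smul {A : Type*} [CStarAlgebra A] {y : A} (hy : IsSelfAdjoint y) :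
    IsUnit (1 + Complex.I • y) := by
  have I_notMem : Complex.I ∉ spectrum ℂ y := fun h ↦ by
    simpa using hy.im_eq_zero_of_mem_spectrum h
  have factor : 1 + Complex.I • y = -Complex.I • (algebraMap ℂ A Complex.I - y) := by
    simp [smul_sub, Algebra.algebraMap_eq_smul_one, smul_smul]
  rw [factor]
  exact (spectrum.notMem_iff.1 I_notMem).smul (Units.mk0 _ (neg_ne_zero.2 Complex.I_ne_zero))

variable {A : Type*} [CStarAlgebra A] [PartialOrder A] [StarOrderedRing A]

theorem sPos_iff_isStrictlyPositive_s2 {v : A} : SPos v ↔ IsStrictlyPositive v :=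
  ⟨fun h ↦ IsStrictlyPositive.iff_of_unital.2 h.2, fun h ↦ ⟨h.isSelfAdjoint, h.nonneg, h.isUnit⟩⟩

theorem exists_isSelfAdjoint_unit_mul_self_eq {v : A} (hv : IsStrictlyPositive v) :
    ∃ s : Aˣ, IsSelfAdjoint (s : A) ∧ (s * s : A) = v := by
  obtain ⟨_, ⟨s, rfl⟩, hs, rfl⟩ :=
    CStarAlgebra.isStrictlyPositive_iff_exists_isUnit_and_isSelfAdjoint_and_eq_mul_self.1 hv
  exact ⟨s, hs, rfl⟩

theorem isSelfAdjoint_units_inv {R : Type*} [Monoid R] [StarMul R] {s : Rˣ}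
    (hs : IsSelfAdjoint (s : R)) : IsSelfAdjoint (↑s⁻¹ : R) := by
  have : star s = s := Units.ext hs.star_eq
  rw [isSelfAdjoint_iff, ← Units.coe_star, star_inv, this]

theorem norm_lt_one_of_isStrictlyPositive_one_sub {a : A} (ha : 0 ≤ a)
    (h : IsStrictlyPositive (1 - a)) : ‖a‖ < 1 := by
  nontriviality A
  have mem_spectrum : 1 - ‖a‖ ∈ spectrum ℝ (1 - a) := by
    rw [← map_one (algebraMap ℝ A), ← spectrum.singleton_sub_eq]
    exact Set.sub_mem_sub rfl (CStarAlgebra.norm_mem_spectrum_of_nonneg ha)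
  exact sub_pos.1 (h.spectrum_pos mem_spectrum)

theorem eventually_isStrictlyPositive_of_isSelfAdjoint {v : A} (hv : IsStrictlyPositive v) :
    ∀ᶠ w in 𝓝 v, IsSelfAdjoint w → IsStrictlyPositive w := by
  nontriviality A
  obtain ⟨r, hr, hrv⟩ :=
    (CFC.exists_pos_algebraMap_le_iff hv.isSelfAdjoint).2 fun _ ↦ hv.spectrum_pos
  filter_upwards [Metric.ball_mem_nhds v hr] with w hw hw_sa
  rw [mem_ball_iff_norm'] at hw
  have pos : IsStrictlyPositive (algebraMap ℝ A (r - ‖v - w‖)) :=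
    isStrictlyPositive_algebraMap (sub_pos.2 hw)
  refine pos.of_le ?_
  calc algebraMap ℝ A (r - ‖v - w‖) = algebraMap ℝ A r - algebraMap ℝ A ‖v - w‖ := map_sub _ _ _
    _ ≤ v - (v - w) := sub_le_sub hrv (hv.isSelfAdjoint.sub hw_sa).le_algebraMap_norm_self
    _ = w := sub_sub_cancel v w

theorem isUnit_add_I_smul {v y : A} (hv : IsStrictlyPositive v) (hy : IsSelfAdjoint y) :
    IsUnit (v + Complex.I • y) := by
  obtain ⟨s, hs, rfl⟩ := exists_isSelfAdjoint_unit_mul_self_eq hv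
  have factor : (s * s + Complex.I • y : A) =
      s * (1 + Complex.I • (↑s⁻¹ * y * ↑s⁻¹)) * s := by
    simp [mul_add, add_mul, mul_assoc]
  have conj_sa : IsSelfAdjoint (↑s⁻¹ * y * ↑s⁻¹ : A) := by
    simpa only [(isSelfAdjoint_units_inv hs).star_eq] using hy.conjugate (↑s⁻¹ : A)
  rw [factor]
  exact (s.isUnit.mul (isUnit_one_add_I_smul conj_sa)).mul s.isUnit

theorem isUnit_sub_I_smul {v y : A} (hv : IsStrictlyPositive v) (hy : IsSelfAdjoint y) :
    IsUnit (v - Complex.I • y) := by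
  simpa only [smul_neg, ← sub_eq_add_neg] using isUnit_add_I_smul hv hy.neg

end StrictlyPositive

section TwoPositive

/-- 2-positivity of a map between star rings. Positive 2×2 matrices are encoded as those of the
form `star y * y`, which are the positive ones when the entries lie in a C⋆-algebra. -/
def TwoPositive {A B : Type*} [Semiring A] [StarRing A] [Semiring B] [StarRing B]
    (η : A → B) : Prop :=
  ∀ p : Matrix (Fin 2) (Fin 2) A, (∃ y, p = star y * y) →
    ∃ z : Matrix (Fin 2) (Fin 2) B, p.map η = star z * z

open scoped InnerProductSpace in
theorem norm_star_mul_add_star_mul_le {B : Type*} [CStarAlgebra B] [PartialOrder B]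
    [StarOrderedRing B] (a b c d : B) :
    ‖star a * b + star c * d‖ ≤
      √‖star a * a + star c * c‖ * √‖star b * b + star d * d‖ := by
  let column (x y : B) : WithCStarModule B (B × B) :=
    (WithCStarModule.equiv B (B × B)).symm (star x, star y)
  have inner_column (x y x' y' : B) :
      ⟪column x y, column x' y'⟫_B = star x' * x + star y' * y := by
    simp [column, WithCStarModule.prod_inner, WithCStarModule.inner_def]
  have norm_column (x y : B) : ‖column x y‖ = √‖star x * x + star y * y‖ := by
    rw [CStarModule.norm_eq_sqrt_norm_inner_self (A := B), inner_column]
  rw [← inner_column, ← norm_column, ← norm_column, mul_comm]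
  exact CStarModule.norm_inner_le _

namespace TwoPositive

section StarRing

variable {A B : Type*} [Semiring A] [StarRing A]

theorem exists_map_star_mul [Semiring B] [StarRing B] {η : A → B} (hη : TwoPositive η) (a b : A) :
    ∃ x y z w : B, η (star a * a) = star x * x + star z * z ∧
      η (star a * b) = star x * y + star z * w ∧ η (star b * b) = star y * y + star w * w := by
  obtain ⟨z, hz⟩ := hη _ ⟨!![a, b; 0, 0], rfl⟩
  have entry (i j) := congrFun₂ hz i j
  simp only [Matrix.map_apply, Matrix.mul_apply, Matrix.star_apply, Fin.sum_univ_two] at entry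
  refine ⟨z 0 0, z 0 1, z 1 0, z 1 1, ?_, ?_, ?_⟩
  · simpa using entry 0 0
  · simpa using entry 0 1
  · simpa using entry 1 1

theorem map_star [Semiring B] [StarRing B] {η : A → B} (hη : TwoPositive η) (a : A) :
    η (star a) = star (η a) := by
  obtain ⟨z, hz⟩ := hη _ ⟨!![1, a; 0, 0], rfl⟩
  have entry (i j) := congrFun₂ hz i j
  simp only [Matrix.map_apply, Matrix.mul_apply, Matrix.star_apply, Fin.sum_univ_two] at entry
  have map_a : η a = star (z 0 0) * z 0 1 + star (z 1 0) * z 1 1 := by simpa using entry 0 1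
  have map_star_a : η (star a) = star (z 0 1) * z 0 0 + star (z 1 1) * z 1 0 := by
    simpa using entry 1 0
  simp only [map_a, map_star_a, star_add, star_mul, star_star]

theorem map_star_mul_self_nonneg [Semiring B] [StarRing B] [PartialOrder B] [StarOrderedRing B]
    {η : A → B} (hη : TwoPositive η) (a : A) : 0 ≤ η (star a * a) := by
  obtain ⟨x, -, z, -, h, -⟩ := hη.exists_map_star_mul a 0
  rw [h]
  exact add_nonneg (star_mul_self_nonneg x) (star_mul_self_nonneg z)

theorem norm_conj_map_star_mul_le [CStarAlgebra B] [PartialOrder B] [StarOrderedRing B]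
    {η : A → B} (hη : TwoPositive η) (a b : A) (t : B) :
    ‖star t * η (star a * b) * t‖ ≤
      √‖star t * η (star a * a) * t‖ * √‖star t * η (star b * b) * t‖ := by
  obtain ⟨x, y, z, w, haa, hab, hbb⟩ := hη.exists_map_star_mul a b
  rw [haa, hab, hbb]
  simpa only [star_mul, mul_add, add_mul, mul_assoc] using
    norm_star_mul_add_star_mul_le (x * t) (y * t) (z * t) (w * t)

end StarRing

variable {A B F : Type*} [CStarAlgebra A] [PartialOrder A] [StarOrderedRing A]
  [CStarAlgebra B] [PartialOrder B] [StarOrderedRing B] [FunLike F A B] [LinearMapClass F ℂ A B]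

theorem monotone {η : F} (hη : TwoPositive η) : Monotone η := fun a b hab ↦ by
  obtain ⟨c, hc⟩ := CStarAlgebra.nonneg_iff_eq_star_mul_self.1 (sub_nonneg.2 hab)
  rw [← sub_nonneg, ← map_sub, hc]
  exact hη.map_star_mul_self_nonneg c

theorem norm_conj_map_star_mul_self_mul_le {η : F} (hη : TwoPositive η) (k a : A) (t : B) :
    ‖star t * η (star (k * a) * (k * a)) * t‖ ≤ ‖k‖ ^ 2 * ‖star t * η (star a * a) * t‖ := by
  have le_smul : star (k * a) * (k * a) ≤ ((‖k‖ ^ 2 : ℝ) : ℂ) • (star a * a) := by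
    have := CStarAlgebra.star_left_conjugate_le_norm_smul (a := a)
      (IsSelfAdjoint.star_mul_self k)
    rw [CStarRing.norm_star_mul_self, ← pow_two] at this
    simpa only [star_mul, mul_assoc, Complex.coe_smul] using this
  calc ‖star t * η (star (k * a) * (k * a)) * t‖
      ≤ ‖star t * η (((‖k‖ ^ 2 : ℝ) : ℂ) • (star a * a)) * t‖ :=
        CStarAlgebra.norm_le_norm_of_nonneg_of_le
          (star_left_conjugate_nonneg (hη.map_star_mul_self_nonneg _) t)
          (star_left_conjugate_le_conjugate (hη.monotone le_smul) t)
    _ = ‖k‖ ^ 2 * ‖star t * η (star a * a) * t‖ := by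
        rw [map_smul, mul_smul_comm, smul_mul_assoc, norm_smul, Complex.norm_real,
          Real.norm_of_nonneg (sq_nonneg _)]

theorem norm_conj_map_star_mul_mul_le {η : F} (hη : TwoPositive η) (a k b : A) (t : B) :
    ‖star t * η (star a * k * b) * t‖ ≤
      ‖k‖ * (√‖star t * η (star a * a) * t‖ * √‖star t * η (star b * b) * t‖) := by
  calc ‖star t * η (star a * k * b) * t‖
      ≤ √‖star t * η (star a * a) * t‖ * √‖star t * η (star (k * b) * (k * b)) * t‖ := by
        simpa only [mul_assoc] using hη.norm_conj_map_star_mul_le a (k * b) t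
    _ ≤ √‖star t * η (star a * a) * t‖ * √(‖k‖ ^ 2 * ‖star t * η (star b * b) * t‖) := by
        gcongr
        exact hη.norm_conj_map_star_mul_self_mul_le k b t
    _ = ‖k‖ * (√‖star t * η (star a * a) * t‖ * √‖star t * η (star b * b) * t‖) := by
        rw [Real.sqrt_mul (sq_nonneg _), Real.sqrt_sq (norm_nonneg k), mul_left_comm]

end TwoPositive

end TwoPositive

section SymmResolvent

/-- The half-sum `((v + iy)⁻¹ + (v - iy)⁻¹)/2`, equal to `(y v⁻¹ y + v)⁻¹` whenever `v` and `v ± iy`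
are invertible; unlike the latter it makes no reference to `v⁻¹`. -/
def symmResolvent {R : Type*} [Ring R] [Algebra ℂ R] (y v : R) : R :=
  (2 : ℂ)⁻¹ • (Ring.inverse (v + Complex.I • y) + Ring.inverse (v - Complex.I • y))

section Algebra

variable {R : Type*} [Ring R] [Algebra ℂ R] {y v : R}

theorem symmResolvent_eq_inverse_add_mul_inverse_sub (h_add : IsUnit (v + Complex.I • y))
    (h_sub : IsUnit (v - Complex.I • y)) :
    symmResolvent y v =
      Ring.inverse (v + Complex.I • y) * v * Ring.inverse (v - Complex.I • y) := by
  rw [symmResolvent, Ring.inverse_add_inverse (iff_of_true h_add h_sub), add_add_sub_cancel,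
    ← two_smul ℂ v, mul_smul_comm, smul_mul_assoc, inv_smul_smul₀ two_ne_zero]

theorem symmResolvent_eq_inverse_sub_mul_inverse_add (h_add : IsUnit (v + Complex.I • y))
    (h_sub : IsUnit (v - Complex.I • y)) :
    symmResolvent y v =
      Ring.inverse (v - Complex.I • y) * v * Ring.inverse (v + Complex.I • y) := by
  rw [symmResolvent, add_comm (Ring.inverse _),
    Ring.inverse_add_inverse (iff_of_true h_sub h_add), sub_add_add_cancel, ← two_smul ℂ v,
    mul_smul_comm, smul_mul_assoc, inv_smul_smul₀ two_ne_zero]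

theorem symmResolvent_eq_inverse (hv : IsUnit v) (h_add : IsUnit (v + Complex.I • y))
    (h_sub : IsUnit (v - Complex.I • y)) :
    symmResolvent y v = Ring.inverse (y * Ring.inverse v * y + v) := by
  have factor : (v + Complex.I • y) * Ring.inverse v * (v - Complex.I • y) =
      y * Ring.inverse v * y + v := by
    rw [add_mul, Ring.mul_inverse_cancel v hv, add_mul, one_mul, mul_sub, smul_mul_assoc,
      smul_mul_smul_comm, Complex.I_mul_I, smul_mul_assoc, Ring.inverse_mul_cancel_right _ _ hv,
      neg_smul, one_smul]
    abel
  rw [← factor, Ring.inverse_mul (.inr h_sub), Ring.inverse_mul (.inl h_add), ← mul_assoc,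
    Ring.inverse_inverse hv,
    symmResolvent_eq_inverse_sub_mul_inverse_add h_add h_sub]

theorem star_inverse_add_I_smul [StarRing R] [StarModule ℂ R] (y v : R) :
    star (Ring.inverse (v + Complex.I • y)) =
      Ring.inverse (star v - Complex.I • star y) := by
  rw [← Ring.inverse_star, star_add, star_smul]
  simp [sub_eq_add_neg]

theorem symmResolvent_star [StarRing R] [StarModule ℂ R] (y v : R) :
    symmResolvent (star y) (star v) = star (symmResolvent y v) := by
  have star_sub : star (Ring.inverse (v - Complex.I • y)) =
      Ring.inverse (star v + Complex.I • star y) := by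
    simpa [← sub_eq_add_neg] using star_inverse_add_I_smul (-y) v
  rw [symmResolvent, symmResolvent, star_smul, star_add, star_sub, star_inverse_add_I_smul,
    add_comm]
  simp

end Algebra

section Normed

variable {R : Type*} [NormedRing R] [NormedAlgebra ℂ R]

/-- The mean `x ↦ (a x a + b x b)/2` of two two-sided multiplications. -/
def sandwichMean (a b : R) : R →L[ℂ] R :=
  (2 : ℂ)⁻¹ • (.mulLeftRight ℂ R a a + .mulLeftRight ℂ R b b)

theorem sandwichMean_apply (a b x : R) :
    sandwichMean a b x = (2 : ℂ)⁻¹ • (a * x * a + b * x * b) := rfl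

variable [CompleteSpace R] {y v : R}

theorem analyticAt_symmResolvent (h_add : IsUnit (v + Complex.I • y))
    (h_sub : IsUnit (v - Complex.I • y)) :
    AnalyticAt ℂ (fun p : R × R ↦ symmResolvent p.1 p.2) (y, v) := by
  have analytic_smul : AnalyticAt ℂ (fun p : R × R ↦ Complex.I • p.1) (y, v) :=
    analyticAt_fst.fun_const_smul
  have analytic_add : AnalyticAt ℂ (fun p : R × R ↦ Ring.inverse (p.2 + Complex.I • p.1)) (y, v) :=
    (analyticAt_inverse h_add.unit).fun_comp_of_eq (analyticAt_snd.fun_add analytic_smul) rfl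
  have analytic_sub : AnalyticAt ℂ (fun p : R × R ↦ Ring.inverse (p.2 - Complex.I • p.1)) (y, v) :=
    (analyticAt_inverse h_sub.unit).fun_comp_of_eq (analyticAt_snd.fun_sub analytic_smul) rfl
  exact (analytic_add.fun_add analytic_sub).fun_const_smul

theorem hasFDerivAt_symmResolvent (h_add : IsUnit (v + Complex.I • y))
    (h_sub : IsUnit (v - Complex.I • y)) :
    HasFDerivAt (symmResolvent y) (-sandwichMean (Ring.inverse (v + Complex.I • y))
      (Ring.inverse (v - Complex.I • y))) v := by
  have deriv_inverse {a : R} (ha : IsUnit a) : HasFDerivAt Ring.inverse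
      (-ContinuousLinearMap.mulLeftRight ℂ R (Ring.inverse a) (Ring.inverse a)) a := by
    obtain ⟨a, rfl⟩ := ha
    simpa only [Ring.inverse_unit] using hasFDerivAt_ringInverse (𝕜 := ℂ) a
  have deriv_sum := ((deriv_inverse h_add).comp v ((hasFDerivAt_id v).add_const _)).add
    ((deriv_inverse h_sub).comp v ((hasFDerivAt_id v).sub_const _))
  refine (deriv_sum.const_smul (2 : ℂ)⁻¹).congr_fderiv ?_
  ext x
  simp only [ContinuousLinearMap.comp_id, smul_add, smul_neg, add_apply, neg_apply, smul_apply,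
    ContinuousLinearMap.mulLeftRight_apply, sandwichMean_apply, neg_add_rev]
  abel

end Normed

end SymmResolvent

section Linearization

theorem isUnit_one_add_of_norm_conj_lt_one {R : Type*} [NormedRing R] [CompleteSpace R]
    (s : Rˣ) {m : R} (hm : ‖(↑s⁻¹ * m * s : R)‖ < 1) : IsUnit (1 + m) := by
  have conj_eq : (1 + m : R) = s * (1 - -(↑s⁻¹ * m * s)) * ↑s⁻¹ := by
    simp [mul_add, add_mul, mul_assoc]
  rw [← norm_neg] at hm
  rw [conj_eq]
  exact (s.isUnit.mul (isUnit_one_sub_of_norm_lt_one hm)).mul s⁻¹.isUnit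

/-- The two-sided multiplication `x ↦ s x s` by a unit, as an invertible operator. -/
def sandwichUnit {R : Type*} [NormedRing R] [NormedAlgebra ℂ R] (s : Rˣ) : (R →L[ℂ] R)ˣ where
  val := .mulLeftRight ℂ R s s
  inv := .mulLeftRight ℂ R ↑s⁻¹ ↑s⁻¹
  val_inv := by ext x; simp [mul_assoc]
  inv_val := by ext x; simp [mul_assoc]

/-- A `⋆`-homomorphism of C⋆-algebras as a continuous linear map. -/
def starAlgHomCLM {A B : Type*} [CStarAlgebra A] [CStarAlgebra B] (ι : B →⋆ₐ[ℂ] A) : B →L[ℂ] A :=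
  ι.toAlgHom.toLinearMap.mkContinuous 1 fun x ↦ by
    simpa using NonUnitalStarAlgHom.norm_apply_le ι x

theorem starAlgHomCLM_apply {A B : Type*} [CStarAlgebra A] [CStarAlgebra B] (ι : B →⋆ₐ[ℂ] A)
    (x : B) : starAlgHomCLM ι x = ι x := rfl

theorem norm_conj_lt_one_of_isStrictlyPositive_sub {A : Type*} [CStarAlgebra A] [PartialOrder A]
    [StarOrderedRing A] {s : Aˣ} (hs : IsSelfAdjoint (s : A)) {c : A} (hc : 0 ≤ c)
    (h : IsStrictlyPositive (s * s - c)) : ‖(↑s⁻¹ * c * ↑s⁻¹ : A)‖ < 1 := by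
  have inv_sa := isSelfAdjoint_units_inv hs
  apply norm_lt_one_of_isStrictlyPositive_one_sub (inv_sa.conjugate_nonneg hc)
  have conj_sub : (1 - ↑s⁻¹ * c * ↑s⁻¹ : A) = ↑s⁻¹ * (s * s - c) * ↑s⁻¹ := by
    simp [mul_sub, sub_mul]
  rw [conj_sub]
  exact .conjugate_of_isUnit_of_isSelfAdjoint _ _ s⁻¹.isUnit inv_sa h

variable {A B : Type*} [CStarAlgebra A] [PartialOrder A] [StarOrderedRing A]
  [CStarAlgebra B] [PartialOrder B] [StarOrderedRing B]

namespace TwoPositive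

theorem norm_conj_map_sandwich_le {F : Type*} [FunLike F A B] [LinearMapClass F ℂ A B] {η : F}
    (hη : TwoPositive η) (ι : B →⋆ₐ[ℂ] A) (r : A) {s : B} (hs : IsSelfAdjoint s) (k t : B) :
    ‖star t * η (r * ι (s * k * s) * r) * t‖ ≤
      ‖k‖ * (√‖star t * η (r * ι (s * s) * star r) * t‖ *
        √‖star t * η (star r * ι (s * s) * r) * t‖) := by
  have ι_s : star (ι s) = ι s := (hs.map ι).star_eq
  calc ‖star t * η (r * ι (s * k * s) * r) * t‖
      ≤ ‖ι k‖ * (√‖star t * η (r * ι (s * s) * star r) * t‖ *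
        √‖star t * η (star r * ι (s * s) * r) * t‖) := by
        simpa only [star_mul, star_star, ι_s, map_mul, mul_assoc] using
          hη.norm_conj_map_star_mul_mul_le (ι s * star r) (ι k) (ι s * r) t
    _ ≤ _ := by
        gcongr
        exact NonUnitalStarAlgHom.norm_apply_le ι k

theorem norm_conj_comp_sandwichMean_le {η : A →L[ℂ] B} (hη : TwoPositive η) (ι : B →⋆ₐ[ℂ] A)
    {s : Bˣ} (hs : IsSelfAdjoint (s : B)) {r : A} {c : B} (hc : η (r * ι (s * s) * star r) = c)
    (hc' : η (star r * ι (s * s) * r) = c) :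
    ‖(↑(sandwichUnit s)⁻¹ * (η ∘L sandwichMean r (star r) ∘L starAlgHomCLM ι) * sandwichUnit s :
      B →L[ℂ] B)‖ ≤ ‖(↑s⁻¹ * c * ↑s⁻¹ : B)‖ := by
  have inv_star : star (↑s⁻¹ : B) = ↑s⁻¹ := (isSelfAdjoint_units_inv hs).star_eq
  have bound (k : B) :
      ‖(↑s⁻¹ * η (r * ι (s * k * s) * r) * ↑s⁻¹ : B)‖ ≤ ‖k‖ * ‖(↑s⁻¹ * c * ↑s⁻¹ : B)‖ := by
    simpa only [hc, hc', inv_star, Real.mul_self_sqrt (norm_nonneg _)] using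
      hη.norm_conj_map_sandwich_le ι r hs k ↑s⁻¹
  have bound_star (k : B) :
      ‖(↑s⁻¹ * η (star r * ι (s * k * s) * star r) * ↑s⁻¹ : B)‖ ≤
        ‖k‖ * ‖(↑s⁻¹ * c * ↑s⁻¹ : B)‖ := by
    simpa only [hc, hc', inv_star, star_star, Real.mul_self_sqrt (norm_nonneg _)] using
      hη.norm_conj_map_sandwich_le ι (star r) hs k ↑s⁻¹
  refine ContinuousLinearMap.opNorm_le_bound _ (norm_nonneg _) fun k ↦ ?_
  calc _ = ‖(2 : ℂ)⁻¹ • (↑s⁻¹ * η (r * ι (s * k * s) * r) * ↑s⁻¹ +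
        ↑s⁻¹ * η (star r * ι (s * k * s) * star r) * ↑s⁻¹ : B)‖ := by
        simp [sandwichUnit, sandwichMean_apply, starAlgHomCLM_apply, mul_add, add_mul]
    _ ≤ 2⁻¹ * (‖k‖ * ‖(↑s⁻¹ * c * ↑s⁻¹ : B)‖ + ‖k‖ * ‖(↑s⁻¹ * c * ↑s⁻¹ : B)‖) := by
        rw [norm_smul, norm_inv, Complex.norm_two]
        gcongr
        exact norm_add_le_of_le (bound k) (bound_star k)
    _ = ‖(↑s⁻¹ * c * ↑s⁻¹ : B)‖ * ‖k‖ := by ring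

theorem isInvertible_one_add_comp_sandwichMean {η : A →L[ℂ] B} (hη : TwoPositive η)
    (ι : B →⋆ₐ[ℂ] A) {v : B} (hv : IsStrictlyPositive v) {r : A} {c : B}
    (hc : η (r * ι v * star r) = c) (hc' : η (star r * ι v * r) = c)
    (h_sub : IsStrictlyPositive (v - c)) :
    (1 + η ∘L sandwichMean r (star r) ∘L starAlgHomCLM ι).IsInvertible := by
  obtain ⟨s, hs, rfl⟩ := exists_isSelfAdjoint_unit_mul_self_eq hv
  have c_nonneg : 0 ≤ c := by
    have := hη.map_star_mul_self_nonneg (ι s * star r)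
    rwa [star_mul, star_star, (hs.map ι).star_eq, mul_assoc, ← mul_assoc (ι s), ← map_mul,
      ← mul_assoc, hc] at this
  obtain ⟨L, hL⟩ := isUnit_one_add_of_norm_conj_lt_one (sandwichUnit s)
    ((hη.norm_conj_comp_sandwichMean_le ι hs hc hc').trans_lt
      (norm_conj_lt_one_of_isStrictlyPositive_sub hs c_nonneg h_sub))
  exact ⟨.ofUnit L, hL⟩

end TwoPositive

end Linearization

section FixedPoint

variable {A B : Type*} [CStarAlgebra A] [CStarAlgebra B]

/-- The defect of the equation `v = q + η(((X - u) v⁻¹ (X - u) + v)⁻¹)` at `p = (u, v)`, written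
with `symmResolvent` so that it is holomorphic in both variables. -/
def fixedPointDefect (ι : B →⋆ₐ[ℂ] A) (X : A) (η : A →L[ℂ] B) (q : B) (p : B × B) : B :=
  p.2 - q - η (symmResolvent (X - ι p.1) (ι p.2))

variable {ι : B →⋆ₐ[ℂ] A} {X : A} {η : A →L[ℂ] B} {q u v : B}

theorem fixedPointDefect_star (hX : IsSelfAdjoint X)
    (hη : TwoPositive η) (hq : IsSelfAdjoint q) (hu : IsSelfAdjoint u) (v : B) :
    fixedPointDefect ι X η q (u, star v) = star (fixedPointDefect ι X η q (u, v)) := by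
  have shift_sa : star (X - ι u) = X - ι u := (hX.sub (hu.map ι)).star_eq
  simp only [fixedPointDefect, star_sub, hq.star_eq, ← hη.map_star, ← symmResolvent_star, shift_sa,
    map_star]

theorem analyticAt_fixedPointDefect (h_add : IsUnit (ι v + Complex.I • (X - ι u)))
    (h_sub : IsUnit (ι v - Complex.I • (X - ι u))) :
    AnalyticAt ℂ (fixedPointDefect ι X η q) (u, v) := by
  have shift : AnalyticAt ℂ (fun p : B × B ↦ (X - ι p.1, ι p.2)) (u, v) :=
    (analyticAt_const.fun_sub ((starAlgHomCLM ι ∘L .fst ℂ B B).analyticAt _)).prod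
      ((starAlgHomCLM ι ∘L .snd ℂ B B).analyticAt _)
  exact (analyticAt_snd.fun_sub analyticAt_const).fun_sub
    ((η.analyticAt _).fun_comp ((analyticAt_symmResolvent h_add h_sub).fun_comp_of_eq shift rfl))

theorem hasFDerivAt_fixedPointDefect_snd (h_add : IsUnit (ι v + Complex.I • (X - ι u)))
    (h_sub : IsUnit (ι v - Complex.I • (X - ι u))) :
    HasFDerivAt (fun y ↦ fixedPointDefect ι X η q (u, y))
      (1 + η ∘L sandwichMean (Ring.inverse (ι v + Complex.I • (X - ι u)))
        (Ring.inverse (ι v - Complex.I • (X - ι u))) ∘L starAlgHomCLM ι) v := by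
  have resolvent_deriv := (hasFDerivAt_symmResolvent h_add h_sub).comp v
    (starAlgHomCLM ι).hasFDerivAt
  refine (((hasFDerivAt_id v).sub_const q).sub
    (η.hasFDerivAt.comp v resolvent_deriv)).congr_fderiv ?_
  ext x
  simp

variable [PartialOrder A] [StarOrderedRing A] [PartialOrder B] [StarOrderedRing B]

theorem isStrictlyPositive_map (ι : B →⋆ₐ[ℂ] A) (hv : IsStrictlyPositive v) :
    IsStrictlyPositive (ι v) :=
  IsStrictlyPositive.iff_of_unital.2 ⟨map_nonneg ι hv.nonneg, hv.isUnit.map ι⟩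

theorem fixedPointDefect_eq_zero_iff (hX : IsSelfAdjoint X) (hu : IsSelfAdjoint u)
    (hv : IsStrictlyPositive v) :
    fixedPointDefect ι X η q (u, v) = 0 ↔
      v = q + η (Ring.inverse ((X - ι u) * Ring.inverse (ι v) * (X - ι u) + ι v)) := by
  have shift_sa : IsSelfAdjoint (X - ι u) := hX.sub (hu.map ι)
  have ι_v := isStrictlyPositive_map ι hv
  rw [fixedPointDefect, sub_sub, sub_eq_zero, symmResolvent_eq_inverse ι_v.isUnit
    (isUnit_add_I_smul ι_v shift_sa) (isUnit_sub_I_smul ι_v shift_sa)]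

theorem isInvertible_of_fixedPointDefect_eq_zero (hX : IsSelfAdjoint X) (hη : TwoPositive η)
    (hq : IsStrictlyPositive q) (hu : IsSelfAdjoint u) (hv : IsStrictlyPositive v)
    (h : fixedPointDefect ι X η q (u, v) = 0) :
    (1 + η ∘L sandwichMean (Ring.inverse (ι v + Complex.I • (X - ι u)))
      (Ring.inverse (ι v - Complex.I • (X - ι u))) ∘L starAlgHomCLM ι).IsInvertible := by
  have shift_sa : IsSelfAdjoint (X - ι u) := hX.sub (hu.map ι)
  have ι_v := isStrictlyPositive_map ι hv
  have h_add := isUnit_add_I_smul ι_v shift_sa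
  have h_sub := isUnit_sub_I_smul ι_v shift_sa
  have star_inverse : star (Ring.inverse (ι v + Complex.I • (X - ι u))) =
      Ring.inverse (ι v - Complex.I • (X - ι u)) := by
    rw [star_inverse_add_I_smul, ι_v.isSelfAdjoint.star_eq, shift_sa.star_eq]
  have q_eq : v - η (symmResolvent (X - ι u) (ι v)) = q := by
    rwa [fixedPointDefect, sub_right_comm, sub_eq_zero] at h
  rw [← star_inverse]
  apply hη.isInvertible_one_add_comp_sandwichMean ι hv
    (c := η (symmResolvent (X - ι u) (ι v)))
  · rw [star_inverse, symmResolvent_eq_inverse_add_mul_inverse_sub h_add h_sub]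
  · rw [star_inverse, symmResolvent_eq_inverse_sub_mul_inverse_add h_add h_sub]
  · rwa [q_eq]

theorem exists_analyticAt_solution (hX : IsSelfAdjoint X) (hη : TwoPositive η)
    (hq : IsStrictlyPositive q) (hu : IsSelfAdjoint u) (hv : IsStrictlyPositive v)
    (h : v = q + η (Ring.inverse ((X - ι u) * Ring.inverse (ι v) * (X - ι u) + ι v))) :
    ∃ φ : B → B, AnalyticAt ℂ φ u ∧ ∀ᶠ w in 𝓝 u, IsSelfAdjoint w →
      IsStrictlyPositive (φ w) ∧ φ w = q + η (Ring.inverse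
        ((X - ι w) * Ring.inverse (ι (φ w)) * (X - ι w) + ι (φ w))) := by
  have shift_sa : IsSelfAdjoint (X - ι u) := hX.sub (hu.map ι)
  have ι_v := isStrictlyPositive_map ι hv
  have h_add := isUnit_add_I_smul ι_v shift_sa
  have h_sub := isUnit_sub_I_smul ι_v shift_sa
  have h_zero := (fixedPointDefect_eq_zero_iff hX hu hv).2 h
  obtain ⟨φ, hφ, φ_u, hφ_zero⟩ := exists_analyticAt_implicit_isSelfAdjoint
    (analyticAt_fixedPointDefect h_add h_sub) h_zero hv.isSelfAdjoint
    (hasFDerivAt_fixedPointDefect_snd h_add h_sub)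
    (isInvertible_of_fixedPointDefect_eq_zero hX hη hq hu hv h_zero)
  have hφ_pos := hφ.continuousAt.eventually
    (φ_u.symm ▸ eventually_isStrictlyPositive_of_isSelfAdjoint hv)
  refine ⟨φ, hφ, ?_⟩
  filter_upwards [hφ_zero, hφ_pos] with w ⟨φ_zero, φ_sa⟩ φ_pos hw
  have φ_w_pos := φ_pos (φ_sa fun y ↦ fixedPointDefect_star hX hη hq.isSelfAdjoint hw y)
  exact ⟨φ_w_pos, (fixedPointDefect_eq_zero_iff hX hw φ_w_pos).1 φ_zero⟩

end FixedPoint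

theorem vq_analytic_general
    {A B : Type*} [CStarAlgebra A] [PartialOrder A] [StarOrderedRing A]
    [CStarAlgebra B] [PartialOrder B] [StarOrderedRing B]
    (ι : B →⋆ₐ[ℂ] A)
    (X : A) (hX : IsSelfAdjoint X)
    (η : A →L[ℂ] B)
    (hη : TwoPositive η)
    (q : B) (hq : SPos q)
    (vq : B → B)
    (hfix : ∀ u : B, IsSelfAdjoint u → SPos (vq u) ∧
      vq u = q + η (Ring.inverse
        ((X - ι u) * Ring.inverse (ι (vq u)) * (X - ι u) + ι (vq u))))
    (huniq : ∀ u : B, IsSelfAdjoint u → ∀ v : B, SPos v →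
      v = q + η (Ring.inverse ((X - ι u) * Ring.inverse (ι v) * (X - ι u) + ι v)) →
      v = vq u) :
    ∃ U : Set B, IsOpen U ∧ {u : B | IsSelfAdjoint u} ⊆ U ∧
      ∃ vt : B → B, AnalyticOnNhd ℂ vt U ∧ ∀ u : B, IsSelfAdjoint u → vt u = vq u := by
  refine exists_analyticOnNhd_extension_of_isSelfAdjoint vq fun u hu ↦ ?_
  obtain ⟨vq_pos, vq_eq⟩ := hfix u hu
  obtain ⟨φ, hφ, hφ_sol⟩ := exists_analyticAt_solution hX hη (sPos_iff_isStrictlyPositive_s2.1 hq) hu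
    (sPos_iff_isStrictlyPositive_s2.1 vq_pos) vq_eq
  refine ⟨φ, hφ, ?_⟩
  filter_upwards [hφ_sol] with w hw w_sa
  exact huniq w w_sa (φ w) (sPos_iff_isStrictlyPositive_s2.2 (hw w_sa).1) (hw w_sa).2

/-- analyticity part of Proposition 3.1, with 2-positivity as in
Remark 3.2(1): if `η` is continuous and 2-positive (positivity of 2×2 matrices is
expressed via the algebraic characterization `p ≥ 0 ↔ ∃ y, p = y* y`, valid in any
C*-algebra, in particular in `M₂(A)` and `M₂(B)`), then the map `u ↦ v_q(u)` extends
to an analytic map on an open neighbourhood of the selfadjoint part of `B`. -/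
theorem vq_analytic
    {A B : Type*} [CStarAlgebra A] [PartialOrder A] [StarOrderedRing A]
    [CStarAlgebra B] [PartialOrder B] [StarOrderedRing B]
    (ι : B →⋆ₐ[ℂ] A) (hι : Function.Injective ι)
    (X : A) (hX : IsSelfAdjoint X)
    (η : A →L[ℂ] B)
    (hη2 : ∀ p : Matrix (Fin 2) (Fin 2) A, (∃ y, p = star y * y) →
      ∃ z : Matrix (Fin 2) (Fin 2) B, p.map ⇑η = star z * z)
    (q : B) (hq : SPos q)
    (vq : B → B)
    (hfix : ∀ u : B, IsSelfAdjoint u → SPos (vq u) ∧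
      vq u = q + η (Ring.inverse
        ((X - ι u) * Ring.inverse (ι (vq u)) * (X - ι u) + ι (vq u))))
    (huniq : ∀ u : B, IsSelfAdjoint u → ∀ v : B, SPos v →
      v = q + η (Ring.inverse ((X - ι u) * Ring.inverse (ι v) * (X - ι u) + ι v)) →
      v = vq u) :
    ∃ U : Set B, IsOpen U ∧ {u : B | IsSelfAdjoint u} ⊆ U ∧
      ∃ vt : B → B, AnalyticOnNhd ℂ vt U ∧ ∀ u : B, IsSelfAdjoint u → vt u = vq u := by
  exact vq_analytic_general ι X hX η hη2 q hq vq hfix huniq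
end
end
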